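/- arXiv:2204.05540 — 2 statements merged into one kernel-verified Lean document; each statement's English description precedes it below -/
import Mathlib

section
/- There exists a basis T of ℂ[B_q(n)] that is a disjoint union of symmetric chains, such that for every symmetric chain (v_k, …, v_{n−k}) in T starting at rank k and ending at rank n−k one has U_n(v_u) = q^k (u+1−k)_q v_{u+1} for k ≤ u < n−k, and D_n(v_{u+1}) = (n−k−u)_q v_u for k ≤ u < n−k. -/
/-- The q-integer `(m)_q = 1 + q + ⋯ + q^(m-1)`, with `(0)_q = 0`. -/
def qInt (q m : ℕ) : ℕ := ∑ i ∈ Finset.range m, q ^ i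

noncomputable instance (F : Type) [Field F] [Fintype F] (n : ℕ) :
    Fintype (Submodule F (Fin n → F)) := Fintype.ofFinite _

/-- The up operator on the free complex vector space `ℂ[B_q(n)]` (realized as
functions `B_q(n) → ℂ`): it sends a subspace to the sum of the subspaces covering
it. -/
noncomputable def upOp (F : Type) [Field F] [Fintype F] (n : ℕ)
    (f : Submodule F (Fin n → F) → ℂ) : Submodule F (Fin n → F) → ℂ :=
  open Classical in
  fun Z => ∑ X : Submodule F (Fin n → F),
    if X ≤ Z ∧ Module.finrank F X + 1 = Module.finrank F Z then f X else 0

/-- The down operator on `ℂ[B_q(n)]`: it sends a subspace to the sum of the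
subspaces it covers. -/
noncomputable def downOp (F : Type) [Field F] [Fintype F] (n : ℕ)
    (f : Submodule F (Fin n → F) → ℂ) : Submodule F (Fin n → F) → ℂ :=
  open Classical in
  fun Z => ∑ Y : Submodule F (Fin n → F),
    if Z ≤ Y ∧ Module.finrank F Z + 1 = Module.finrank F Y then f Y else 0

/-!
In a finite modular lattice two distinct elements have a common upper cover exactly when they have
a common lower cover, so for the up operator `U` and the down operator `D` the commutator
`D U - U D` is diagonal; for the subspaces of `F_q ^ n` it acts on rank `r` as the scalar
`(n - r)_q - (r)_q`. As `D` is the adjoint of `U`, every vector is the sum of one in `ker D` and one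
in `range U`, and `D U` is positive semidefinite, which forces the homogeneous elements of `ker D`
of rank `k` to vanish unless `2 * k ≤ n`. Applying powers of `U` to a homogeneous basis of `ker D`
produces the chains: they span because `U` is nilpotent and `ker D + range U` is everything, and
they are independent because powers of `D` lead back to the basis of `ker D`.
-/

open Module

section QIntegers

variable {q : ℕ}

theorem qInt_zero : qInt q 0 = 0 := Finset.sum_range_zero _

theorem qInt_one : qInt q 1 = 1 := by simp [qInt]

theorem qInt_add (a b : ℕ) : qInt q (a + b) = qInt q a + q ^ a * qInt q b := by
  simp only [qInt, Finset.sum_range_add, pow_add, Finset.mul_sum]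

theorem qInt_strictMono (hq : 0 < q) : StrictMono (qInt q) :=
  strictMono_nat_of_lt_succ fun m => by
    rw [qInt_add, qInt_one, mul_one]
    exact Nat.lt_add_of_pos_right (pow_pos hq m)

theorem qInt_pos (hq : 0 < q) {m : ℕ} (hm : 0 < m) : 0 < qInt q m :=
  qInt_zero.symm.trans_lt (qInt_strictMono hq hm)

theorem pow_mul_qInt_succ_ne_zero {R : Type*} [Semiring R] [CharZero R] (hq : 0 < q) (k j : ℕ) :
    (q : R) ^ k * qInt q (j + 1) ≠ 0 := by
  exact_mod_cast (Nat.mul_pos (pow_pos hq k) (qInt_pos hq j.succ_pos)).ne'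

theorem sum_qInt_sub_qInt {R : Type*} [CommRing R] {n k j : ℕ} (hj : 2 * k + j ≤ n) :
    ∑ i ∈ Finset.range (j + 1), ((qInt q (n - (k + i)) : R) - qInt q (k + i)) =
      (q : R) ^ k * qInt q (j + 1) * qInt q (n - 2 * k - j) := by
  induction j with
  | zero =>
    have hn : n - k = k + (n - 2 * k) := by lia
    simp only [Finset.sum_range_one, zero_add, add_zero, tsub_zero, qInt_one, hn, qInt_add,
      qInt_zero]
    push_cast
    ring
  | succ j ih =>
    obtain ⟨m, rfl⟩ := Nat.exists_eq_add_of_le hj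
    have hpred : 2 * k + (j + 1) + m - 2 * k - j = 1 + m := by lia
    have hlast : 2 * k + (j + 1) + m - 2 * k - (j + 1) = m := by lia
    have hrank : 2 * k + (j + 1) + m - (k + (j + 1)) = k + m := by lia
    rw [Finset.sum_range_succ, ih (by lia), hpred, hlast, hrank, add_comm (j + 1) 1,
      qInt_add k, qInt_add k, qInt_add 1, qInt_add 1, qInt_one]
    push_cast
    ring

end QIntegers

section LinearAlgebra

variable {R E : Type*} [Ring R] [AddCommGroup E] [Module R E]

/-- The linear map `T j` isolates the part of a linear relation of maximal height `j`. -/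
theorem linearIndependent_of_triangular {κ E' : Type*} [AddCommGroup E'] [Module R E']
    {w : κ → E} (height : κ → ℕ) (T : ℕ → E →ₗ[R] E')
    (hlt : ∀ x j, height x < j → T j (w x) = 0)
    (hdiag : ∀ j, LinearIndependent R fun x : {x // height x = j} => T j (w x)) :
    LinearIndependent R w := by
  classical
  rw [linearIndependent_iff']
  intro s g hg
  by_contra! hne
  obtain ⟨x₀, hx₀, hgx₀⟩ := hne
  obtain ⟨x, hx, hmax⟩ := (s.filter (g · ≠ 0)).exists_max_image height
    ⟨x₀, Finset.mem_filter.mpr ⟨hx₀, hgx₀⟩⟩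
  rw [Finset.mem_filter] at hx
  have hlower : ∀ y ∈ s, height y ≠ height x → g y • T (height x) (w y) = 0 := by
    intro y hy hyx
    by_cases hgy : g y = 0
    · rw [hgy, zero_smul]
    · have hle := hmax y (Finset.mem_filter.mpr ⟨hy, hgy⟩)
      rw [hlt y _ (hle.lt_of_ne hyx), smul_zero]
  have htop : ∑ y ∈ s.subtype (height · = height x), g y • T (height x) (w y) = 0 := by
    rw [Finset.sum_subtype_eq_sum_filter (f := fun y => g y • T (height x) (w y)),
      Finset.sum_filter_of_ne fun y hy => not_imp_comm.mp (hlower y hy)]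
    simpa only [map_sum, map_smul, map_zero] using congrArg (T (height x)) hg
  exact hx.2 (linearIndependent_iff'.mp (hdiag (height x)) _ _ htop ⟨x, rfl⟩
    (Finset.mem_subtype.mpr hx.1))

theorem eq_top_of_codisjoint_range {U : Module.End R E} (hU : IsNilpotent U) {S : Submodule R E}
    (hS : S ≤ S.comap U) (hcod : Codisjoint S (LinearMap.range U)) : S = ⊤ := by
  have hpow : ∀ k, S ⊔ LinearMap.range (U ^ k) = ⊤ := by
    intro k
    induction k with
    | zero => rw [pow_zero, Module.End.one_eq_id, LinearMap.range_id, sup_top_eq]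
    | succ k ih =>
      have hmap : S.map (U ^ k) ≤ S := Submodule.map_le_iff_le_comap.mpr <|
        Module.End.pow_apply_mem_of_forall_mem k fun _ hx => hS hx
      rw [eq_top_iff, ← ih]
      refine sup_le le_sup_left ?_
      rw [LinearMap.range_eq_map, ← hcod.eq_top, Submodule.map_sup, ← LinearMap.range_comp,
        ← Module.End.mul_eq_comp, ← pow_succ]
      exact sup_le_sup_right hmap _
  obtain ⟨k, hk⟩ := hU
  simpa only [hk, LinearMap.range_zero, sup_bot_eq] using hpow k

end LinearAlgebra

section Strings

/-- Telescoping: commuting `D` past each factor of `U ^ (j + 1)` contributes one `γ i`. -/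
theorem lower_pow_succ_apply {R E : Type*} [CommRing R] [AddCommGroup E] [Module R E]
    {U D : Module.End R E} {v : E} {γ : ℕ → R} (hv : D v = 0)
    (hcomm : ∀ i, D (U ((U ^ i) v)) = U (D ((U ^ i) v)) + γ i • (U ^ i) v) (j : ℕ) :
    D ((U ^ (j + 1)) v) = (∑ i ∈ Finset.range (j + 1), γ i) • (U ^ j) v := by
  induction j with
  | zero => simpa [hv] using hcomm 0
  | succ j ih =>
    rw [pow_succ' U (j + 1), Module.End.mul_apply, hcomm, ih, map_smul, ← Module.End.mul_apply,
      ← pow_succ', ← add_smul, ← Finset.sum_range_succ]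

variable {𝕜 E : Type*} [Field 𝕜] [AddCommGroup E] [Module 𝕜 E] {U D : Module.End 𝕜 E}
  {ι : Type*} {start last : ι → ℕ} {c : ι → ℕ → E} {a b : ι → ℕ → 𝕜}

theorem pow_apply_string {i : ι}
    (hD : ∀ u, start i ≤ u → u < last i → D (c i (u + 1)) = b i u • c i u) {j : ℕ}
    (hj : start i + j ≤ last i) :
    (D ^ j) (c i (start i + j)) =
      (∏ l ∈ Finset.range j, b i (start i + l)) • c i (start i) := by
  induction j with
  | zero => simp
  | succ j ih =>
    rw [pow_succ, Module.End.mul_apply, ← add_assoc, hD _ (by lia) (by lia), map_smul,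
      ih (by lia), smul_smul, Finset.prod_range_succ, mul_comm]

theorem linearIndependent_strings (hstart : ∀ i, D (c i (start i)) = 0)
    (hD : ∀ i u, start i ≤ u → u < last i → D (c i (u + 1)) = b i u • c i u)
    (hb : ∀ i u, start i ≤ u → u < last i → b i u ≠ 0)
    (hli : LinearIndependent 𝕜 fun i => c i (start i)) :
    LinearIndependent 𝕜
      fun p : Σ i, {u : ℕ // start i ≤ u ∧ u ≤ last i} => c p.1 p.2.1 := by
  let height (p : Σ i, {u : ℕ // start i ≤ u ∧ u ≤ last i}) : ℕ := p.2.1 - start p.1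
  let coeff (p : Σ i, {u : ℕ // start i ≤ u ∧ u ≤ last i}) : 𝕜 :=
    ∏ l ∈ Finset.range (height p), b p.1 (start p.1 + l)
  have hcoeff (p) : coeff p ≠ 0 := Finset.prod_ne_zero_iff.mpr fun l hl => by
    have := p.2.2
    have : l < p.2.1 - start p.1 := Finset.mem_range.mp hl
    exact hb _ _ (by lia) (by lia)
  have hpow (p) : (D ^ height p) (c p.1 p.2.1) = coeff p • c p.1 (start p.1) := by
    have hp : start p.1 + height p = p.2.1 := Nat.add_sub_cancel' p.2.2.1
    rw [← pow_apply_string (hD p.1) (hp.trans_le p.2.2.2), hp]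
  refine linearIndependent_of_triangular height (D ^ ·) (fun p j hj => ?_) fun j => ?_
  · obtain ⟨m, rfl⟩ := Nat.exists_eq_add_of_lt hj
    rw [show height p + m + 1 = m + 1 + height p by lia, pow_add, Module.End.mul_apply, hpow,
      map_smul, pow_succ, Module.End.mul_apply, hstart, map_zero, smul_zero]
  · have hinj : Function.Injective fun p : {p // height p = j} => p.1.1 := by
      rintro ⟨⟨i, u, hu⟩, hp⟩ ⟨⟨i', u', hu'⟩, hp'⟩ (rfl : i = i')
      obtain rfl : u = u' := by dsimp only [height] at hp hp'; lia
      rfl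
    have hfamily : (fun p : {p // height p = j} => (D ^ j) (c p.1.1 p.1.2.1)) =
        (fun p : {p // height p = j} => Units.mk0 _ (hcoeff p.1)) •
          fun p : {p // height p = j} => c p.1.1 (start p.1.1) := by
      ext ⟨p, rfl⟩
      exact hpow p
    rw [hfamily]
    exact (hli.comp _ hinj).units_smul _

theorem span_strings_eq_top (hU : IsNilpotent U)
    (hlast : ∀ i, U (c i (last i)) = 0)
    (hup : ∀ i u, start i ≤ u → u < last i → U (c i u) = a i u • c i (u + 1))
    (hle : ∀ i, start i ≤ last i)
    (hcod : Codisjoint (Submodule.span 𝕜 (Set.range fun i => c i (start i)))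
      (LinearMap.range U)) :
    Submodule.span 𝕜 (Set.range
      fun p : Σ i, {u : ℕ // start i ≤ u ∧ u ≤ last i} => c p.1 p.2.1) = ⊤ := by
  refine eq_top_of_codisjoint_range hU (Submodule.span_le.mpr ?_)
    (hcod.mono_left (Submodule.span_mono ?_))
  · rintro _ ⟨⟨i, u, hu⟩, rfl⟩
    rcases hu.2.lt_or_eq with h | rfl
    · rw [SetLike.mem_coe, Submodule.mem_comap, hup i u hu.1 h]
      exact Submodule.smul_mem _ _ (Submodule.subset_span ⟨⟨i, u + 1, by lia, h⟩, rfl⟩)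
    · rw [SetLike.mem_coe, Submodule.mem_comap, hlast]
      exact Submodule.zero_mem _
  · rintro _ ⟨i, rfl⟩
    exact ⟨⟨i, start i, le_rfl, hle i⟩, rfl⟩

end Strings

section ConjTranspose

open Matrix

variable {m n 𝕜 : Type*} [Fintype m] [Fintype n] [Field 𝕜] [PartialOrder 𝕜] [StarRing 𝕜]
  [StarOrderedRing 𝕜]

theorem codisjoint_ker_conjTranspose_range (A : Matrix m n 𝕜) :
    Codisjoint (LinearMap.ker Aᴴ.mulVecLin) (LinearMap.range A.mulVecLin) := by
  have hdisj : Disjoint (LinearMap.ker Aᴴ.mulVecLin) (LinearMap.range A.mulVecLin) := by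
    rw [Submodule.disjoint_def]
    rintro _ hker ⟨x, rfl⟩
    rw [LinearMap.mem_ker, mulVecLin_apply, mulVecLin_apply, mulVec_mulVec] at hker
    exact (conjTranspose_mul_self_mulVec_eq_zero A x).mp hker
  have hrank : finrank 𝕜 (LinearMap.range Aᴴ.mulVecLin) = finrank 𝕜 (LinearMap.range A.mulVecLin) :=
    rank_conjTranspose A
  refine codisjoint_iff.mpr (Submodule.eq_top_of_disjoint _ _ ?_ hdisj)
  rw [← hrank, add_comm, LinearMap.finrank_range_add_finrank_ker]

theorem le_of_conjTranspose_mulVec_mulVec_eq {A : Matrix m n 𝕜} {x : n → 𝕜} (hx : x ≠ 0)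
    {a b : ℕ} (h : Aᴴ *ᵥ (A *ᵥ x) = ((a : 𝕜) - b) • x) : b ≤ a := by
  have hpos : 0 < star x ⬝ᵥ x := dotProduct_star_self_pos_iff.mpr hx
  have hnorm : star (A *ᵥ x) ⬝ᵥ (A *ᵥ x) = a • (star x ⬝ᵥ x) - b • (star x ⬝ᵥ x) := by
    rw [star_mulVec, ← dotProduct_mulVec, h, dotProduct_smul, sub_smul, Nat.cast_smul_eq_nsmul,
      Nat.cast_smul_eq_nsmul]
  rw [← (nsmul_left_strictMono hpos).le_iff_le, ← sub_nonneg]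
  exact hnorm ▸ dotProduct_star_self_nonneg _

end ConjTranspose

section CoverMatrix

open Matrix

open scoped Classical in
/-- The matrix of the covering relation of a finite poset; the entry at row `y`, column `x`
is `1` when `y` covers `x`, so that `coverMatrix R α *ᵥ Pi.single x 1` is the sum of the elements
covering `x`. -/
noncomputable def coverMatrix (R α : Type*) [Zero R] [One R] [PartialOrder α] : Matrix α α R :=
  Matrix.of fun y x => if x ⋖ y then 1 else 0

variable (R : Type*) {α : Type*}

theorem conjTranspose_coverMatrix [NonAssocSemiring R] [StarRing R] [PartialOrder α] :
    (coverMatrix R α)ᴴ = (coverMatrix R α)ᵀ := by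
  ext x y
  simp only [coverMatrix, conjTranspose_apply, transpose_apply, of_apply, apply_ite star, star_one,
    star_zero]

/-- In a modular lattice, distinct `x` and `z` have at most the common upper cover `x ⊔ z` and at
most the common lower cover `x ⊓ z`, and each of them is one exactly when the other is. -/
theorem card_common_upper_covers_eq [Lattice α] [IsModularLattice α] {x z : α} (hxz : x ≠ z) :
    Nat.card {y // x ⋖ y ∧ z ⋖ y} = Nat.card {y // y ⋖ x ∧ y ⋖ z} := by
  have hsup : ∀ y, (x ⋖ y ∧ z ⋖ y) ↔ y = x ⊔ z ∧ x ⊓ z ⋖ x ∧ x ⊓ z ⋖ z := by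
    refine fun y => ⟨fun ⟨hx, hz⟩ => ?_, ?_⟩
    · obtain rfl := hx.wcovBy.sup_eq hz.wcovBy hxz
      exact ⟨rfl, inf_covBy_of_covBy_sup_of_covBy_sup_left hx hz,
        inf_covBy_of_covBy_sup_of_covBy_sup_right hx hz⟩
    · rintro ⟨rfl, hx, hz⟩
      exact ⟨covBy_sup_of_inf_covBy_right hz, covBy_sup_of_inf_covBy_left hx⟩
  have hinf : ∀ y, (y ⋖ x ∧ y ⋖ z) ↔ y = x ⊓ z ∧ x ⊓ z ⋖ x ∧ x ⊓ z ⋖ z := by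
    refine fun y => ⟨fun ⟨hx, hz⟩ => ?_, ?_⟩
    · obtain rfl := hx.wcovBy.inf_eq hz.wcovBy hxz
      exact ⟨rfl, hx, hz⟩
    · rintro ⟨rfl, h⟩
      exact h
  rw [Nat.card_congr (Equiv.subtypeEquivRight hsup), Nat.card_congr (Equiv.subtypeEquivRight hinf)]
  generalize (x ⊓ z ⋖ x ∧ x ⊓ z ⋖ z) = p
  by_cases hp : p <;> simp [hp]

variable [Fintype α]

theorem transpose_coverMatrix_mul_apply [NonAssocSemiring R] [PartialOrder α] (x z : α) :
    ((coverMatrix R α)ᵀ * coverMatrix R α) x z = (Nat.card {y // x ⋖ y ∧ z ⋖ y} : R) := by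
  classical
  simp [coverMatrix, mul_apply, ← ite_and, Fintype.card_subtype, and_comm]

theorem coverMatrix_mul_transpose_apply [NonAssocSemiring R] [PartialOrder α] (x z : α) :
    (coverMatrix R α * (coverMatrix R α)ᵀ) x z = (Nat.card {y // y ⋖ x ∧ y ⋖ z} : R) := by
  classical
  simp [coverMatrix, mul_apply, ← ite_and, Fintype.card_subtype, and_comm]

theorem transpose_coverMatrix_mul [DecidableEq α] [Lattice α] [IsModularLattice α] [Ring R] :
    (coverMatrix R α)ᵀ * coverMatrix R α = coverMatrix R α * (coverMatrix R α)ᵀ +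
      diagonal fun x => (Nat.card {y // x ⋖ y} : R) - Nat.card {y // y ⋖ x} := by
  ext x z
  rw [Matrix.add_apply, transpose_coverMatrix_mul_apply, coverMatrix_mul_transpose_apply]
  obtain rfl | hxz := eq_or_ne x z
  · simp only [and_self, diagonal_apply_eq, add_sub_cancel]
  · rw [diagonal_apply_ne _ hxz, add_zero, card_common_upper_covers_eq hxz]

end CoverMatrix

section UpDown

variable (R α : Type*) [CommRing R] [PartialOrder α] [Fintype α]

/-- The up operator of a finite poset `α`, on the free `R`-module of functions `α → R`. -/
noncomputable def upMap : Module.End R (α → R) := (coverMatrix R α).mulVecLin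

/-- The down operator of a finite poset `α`, the transpose of `upMap`. -/
noncomputable def downMap : Module.End R (α → R) := (coverMatrix R α).transpose.mulVecLin

variable {R α}

open Classical in
theorem upMap_apply (f : α → R) (y : α) : upMap R α f y = ∑ x, if x ⋖ y then f x else 0 := by
  simp [upMap, coverMatrix, Matrix.mulVec, dotProduct]

open Classical in
theorem downMap_apply (f : α → R) (x : α) : downMap R α f x = ∑ y, if x ⋖ y then f y else 0 := by
  simp [downMap, coverMatrix, Matrix.vecMul, dotProduct]

end UpDown

section Homogeneous

variable {α : Type*}

/-- `f`, seen as the formal combination `∑ x, f x • x`, only involves elements of rank `r`. -/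
def IsHomogeneous {R : Type*} [Zero R] (rk : α → ℕ) (r : ℕ) (f : α → R) : Prop :=
  ∀ x, f x ≠ 0 → rk x = r

variable {R : Type*} [CommRing R] {rk : α → ℕ} {r : ℕ} {f : α → R}

theorem IsHomogeneous.smul (hf : IsHomogeneous rk r f) (a : R) : IsHomogeneous rk r (a • f) :=
  fun x hx => hf x (right_ne_zero_of_mul hx)

theorem isHomogeneous_single [DecidableEq α] (x : α) (a : R) :
    IsHomogeneous rk (rk x) (Pi.single x a) := fun y hy => by
  rw [Pi.single_apply, ite_ne_right_iff] at hy
  rw [hy.1]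

theorem isHomogeneous_indicator (rk : α → ℕ) (r : ℕ) (f : α → R) :
    IsHomogeneous rk r ({x | rk x = r}.indicator f) :=
  fun _ hx => Set.mem_of_indicator_ne_zero (s := {x | rk x = r}) hx

theorem sum_indicator_rank_eq {n : ℕ} (hrk : ∀ x, rk x ≤ n) (f : α → R) :
    ∑ r ∈ Finset.range (n + 1), {x | rk x = r}.indicator f = f := by
  ext x
  simp [Set.indicator_apply, hrk x]

variable [Fintype α] [PartialOrder α]

theorem IsHomogeneous.upMap (hcov : ∀ x y, x ⋖ y → rk x + 1 = rk y)
    (hf : IsHomogeneous rk r f) : IsHomogeneous rk (r + 1) (upMap R α f) := by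
  classical
  intro y hy
  rw [upMap_apply] at hy
  obtain ⟨x, -, hx⟩ := Finset.exists_ne_zero_of_sum_ne_zero hy
  rw [ite_ne_right_iff] at hx
  rw [← hcov x y hx.1, hf x hx.2]

theorem IsHomogeneous.upMap_pow (hcov : ∀ x y, x ⋖ y → rk x + 1 = rk y)
    (hf : IsHomogeneous rk r f) (j : ℕ) : IsHomogeneous rk (r + j) ((_root_.upMap R α ^ j) f) := by
  induction j with
  | zero => exact hf
  | succ j ih =>
    rw [pow_succ', Module.End.mul_apply]
    exact ih.upMap hcov

theorem isNilpotent_upMap {n : ℕ} (hrk : ∀ x, rk x ≤ n) (hcov : ∀ x y, x ⋖ y → rk x + 1 = rk y) :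
    IsNilpotent (upMap R α) := by
  classical
  refine ⟨n + 1, LinearMap.pi_ext fun x a => funext fun y => ?_⟩
  by_contra hy
  have := ((isHomogeneous_single x a).upMap_pow hcov (n + 1)) y hy
  have := hrk y
  lia

theorem downMap_indicator (hcov : ∀ x y, x ⋖ y → rk x + 1 = rk y) (r : ℕ) (f : α → R) :
    downMap R α ({y | rk y = r}.indicator f) = {x | rk x + 1 = r}.indicator (downMap R α f) := by
  classical
  ext x
  simp only [Set.indicator_apply, downMap_apply, Set.mem_ofPred_eq]
  have hterm : ∀ y, (if x ⋖ y then if rk y = r then f y else 0 else 0) =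
      if rk x + 1 = r then if x ⋖ y then f y else 0 else 0 := fun y => by
    by_cases hxy : x ⋖ y
    · simp only [if_pos hxy, hcov x y hxy]
    · simp only [if_neg hxy, ite_self]
  simp only [hterm]
  split_ifs
  · rfl
  · exact Finset.sum_const_zero

end Homogeneous

section QGrading

/-- `rk` is a rank function for which `α` has the cover numbers of the lattice of subspaces of
`F_q ^ n`: an element of rank `r` covers `(r)_q` elements and is covered by `(n - r)_q` elements.
For `q = 1` these are the cover numbers of the Boolean lattice. -/
structure IsQGrading {α : Type*} [PartialOrder α] (q n : ℕ) (rk : α → ℕ) : Prop where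
  rank_le (x : α) : rk x ≤ n
  rank_add_one (x y : α) : x ⋖ y → rk x + 1 = rk y
  card_lower_covers (x : α) : Nat.card {y // y ⋖ x} = qInt q (rk x)
  card_upper_covers (x : α) : Nat.card {y // x ⋖ y} = qInt q (n - rk x)

/-- `v` is homogeneous of rank `k` and killed by the down operator: the bottom of a chain. -/
structure IsPrimitive {R α : Type*} [CommRing R] [PartialOrder α] [Fintype α] (rk : α → ℕ) (k : ℕ)
    (v : α → R) : Prop where
  isHomogeneous : IsHomogeneous rk k v
  downMap_eq_zero : downMap R α v = 0

/-- The chain with bottom `v` of rank `k`, indexed by the rank `u ≥ k`: the multiple of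
`U ^ (u - k) v` for which `U` acts with the coefficients `q ^ k * (u + 1 - k)_q`. -/
noncomputable def qChain {𝕜 α : Type*} [Field 𝕜] [PartialOrder α] [Fintype α] (q k : ℕ) (v : α → 𝕜)
    (u : ℕ) : α → 𝕜 :=
  (∏ i ∈ Finset.range (u - k), (q : 𝕜) ^ k * qInt q (i + 1))⁻¹ • (upMap 𝕜 α ^ (u - k)) v

section Commutator

variable {R α : Type*} [CommRing R] [Lattice α] [IsModularLattice α] [Fintype α] {q n r : ℕ}
  {rk : α → ℕ} {f : α → R}

theorem downMap_upMap_of_isHomogeneous (h : IsQGrading q n rk) (hf : IsHomogeneous rk r f) :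
    downMap R α (upMap R α f) =
      upMap R α (downMap R α f) + ((qInt q (n - r) : R) - qInt q r) • f := by
  classical
  simp only [upMap, downMap, Matrix.mulVecLin_apply, Matrix.mulVec_mulVec,
    transpose_coverMatrix_mul, Matrix.add_mulVec, h.card_lower_covers, h.card_upper_covers]
  congr 1
  ext x
  rw [Matrix.mulVec_diagonal, Pi.smul_apply, smul_eq_mul]
  by_cases hx : f x = 0
  · rw [hx, mul_zero, mul_zero]
  · rw [hf x hx]

theorem IsPrimitive.downMap_upMap_pow_succ {v : α → R} {k j : ℕ} (hv : IsPrimitive rk k v)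
    (h : IsQGrading q n rk) (hj : 2 * k + j ≤ n) :
    downMap R α ((upMap R α ^ (j + 1)) v) =
      ((q : R) ^ k * qInt q (j + 1) * qInt q (n - 2 * k - j)) • (upMap R α ^ j) v := by
  rw [← sum_qInt_sub_qInt hj]
  exact lower_pow_succ_apply (γ := fun i => (qInt q (n - (k + i)) : R) - qInt q (k + i))
    hv.downMap_eq_zero (fun i => downMap_upMap_of_isHomogeneous h
      (hv.isHomogeneous.upMap_pow h.rank_add_one i)) j

end Commutator

section QChain

variable {𝕜 α : Type*} [Field 𝕜] [Fintype α] {q n k : ℕ} {rk : α → ℕ} {v : α → 𝕜}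

theorem qChain_self [PartialOrder α] : qChain q k v k = v := by
  rw [qChain, Nat.sub_self, Finset.prod_range_zero, inv_one, one_smul, pow_zero,
    Module.End.one_apply]

theorem IsPrimitive.isHomogeneous_qChain [PartialOrder α]
    (hv : IsPrimitive rk k v) (hcov : ∀ x y, x ⋖ y → rk x + 1 = rk y) {u : ℕ} (hu : k ≤ u) :
    IsHomogeneous rk u (qChain q k v u) := by
  have := (hv.isHomogeneous.upMap_pow hcov (u - k)).smul
    (∏ i ∈ Finset.range (u - k), (q : 𝕜) ^ k * qInt q (i + 1))⁻¹
  rwa [Nat.add_sub_cancel' hu] at this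

theorem upMap_qChain [PartialOrder α] [CharZero 𝕜] (hq : 0 < q) {u : ℕ} (hu : k ≤ u) :
    upMap 𝕜 α (qChain q k v u) =
      ((q : 𝕜) ^ k * qInt q (u + 1 - k)) • qChain q k v (u + 1) := by
  rw [qChain, qChain, Nat.succ_sub hu, map_smul, ← Module.End.mul_apply, ← pow_succ', smul_smul,
    Finset.prod_range_succ, mul_inv_rev,
    mul_inv_cancel_left₀ (pow_mul_qInt_succ_ne_zero hq k (u - k))]

theorem IsPrimitive.downMap_qChain_succ [Lattice α] [IsModularLattice α] [CharZero 𝕜]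
    (hv : IsPrimitive rk k v) (hq : 0 < q) (h : IsQGrading q n rk) {u : ℕ} (hu : k ≤ u)
    (hun : k + u ≤ n) :
    downMap 𝕜 α (qChain q k v (u + 1)) = (qInt q (n - k - u) : 𝕜) • qChain q k v u := by
  obtain ⟨j, rfl⟩ := Nat.exists_eq_add_of_le hu
  have hne := pow_mul_qInt_succ_ne_zero (R := 𝕜) hq k j
  rw [qChain, qChain, add_assoc, Nat.add_sub_cancel_left, Nat.add_sub_cancel_left, map_smul,
    hv.downMap_upMap_pow_succ h (by lia), smul_smul, smul_smul, Finset.prod_range_succ, mul_inv,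
    mul_assoc, inv_mul_cancel_left₀ hne, mul_comm, show n - k - (k + j) = n - 2 * k - j by lia]

theorem exists_isPrimitive_basis_ker [PartialOrder α] (hrk : ∀ x, rk x ≤ n)
    (hcov : ∀ x y, x ⋖ y → rk x + 1 = rk y) :
    ∃ (B : Set (α → 𝕜)) (start : B → ℕ), (∀ b, IsPrimitive rk (start b) b.1) ∧
      LinearIndependent 𝕜 ((↑) : B → α → 𝕜) ∧
      Submodule.span 𝕜 B = LinearMap.ker (downMap 𝕜 α) := by
  obtain ⟨B, hB, hspan, hli⟩ := exists_linearIndependent 𝕜 {v : α → 𝕜 | ∃ k, IsPrimitive rk k v}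
  choose start hstart using fun b : B => hB b.2
  refine ⟨B, start, hstart, hli, le_antisymm ?_ fun f hf => ?_⟩
  · exact Submodule.span_le.mpr fun b hb => (hstart ⟨b, hb⟩).downMap_eq_zero
  · rw [hspan, ← sum_indicator_rank_eq hrk f]
    refine Submodule.sum_mem _ fun r _ =>
      Submodule.subset_span ⟨r, isHomogeneous_indicator rk r f, ?_⟩
    rw [downMap_indicator hcov, LinearMap.mem_ker.mp hf, Set.indicator_zero']

end QChain

variable {𝕜 α : Type*} [Field 𝕜] [PartialOrder 𝕜] [StarRing 𝕜] [StarOrderedRing 𝕜]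
  [Fintype α] {q n k : ℕ} {rk : α → ℕ} {v : α → 𝕜}

theorem codisjoint_ker_downMap_range_upMap [PartialOrder α] :
    Codisjoint (LinearMap.ker (downMap 𝕜 α)) (LinearMap.range (upMap 𝕜 α)) := by
  rw [downMap, ← conjTranspose_coverMatrix]
  exact codisjoint_ker_conjTranspose_range _

variable [Lattice α] [IsModularLattice α]

/-- `D U` is positive semidefinite, but acts on the kernel of `D` in rank `k` as the scalar
`(n - k)_q - (k)_q`, which is negative for `n < 2 * k`. -/
theorem IsPrimitive.two_mul_le (hv : IsPrimitive rk k v) (hq : 0 < q) (h : IsQGrading q n rk)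
    (hv0 : v ≠ 0) : 2 * k ≤ n := by
  have hDU := downMap_upMap_of_isHomogeneous h hv.isHomogeneous
  rw [hv.downMap_eq_zero, map_zero, zero_add, downMap, ← conjTranspose_coverMatrix] at hDU
  have := (qInt_strictMono hq).le_iff_le.mp (le_of_conjTranspose_mulVec_mulVec_eq hv0 hDU)
  lia

/-- One step above rank `n - k` the chain is again primitive, of rank too large to be nonzero. -/
theorem IsPrimitive.qChain_eq_zero (hv : IsPrimitive rk k v) (hq : 0 < q)
    (h : IsQGrading q n rk) (hk : 2 * k ≤ n) : qChain q k v (n - k + 1) = 0 := by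
  by_contra hne
  have hprim : IsPrimitive rk (n - k + 1) (qChain q k v (n - k + 1)) :=
    ⟨hv.isHomogeneous_qChain h.rank_add_one (by lia), by
      rw [hv.downMap_qChain_succ hq h (by lia) (by lia), Nat.sub_self, qInt_zero, Nat.cast_zero,
        zero_smul]⟩
  have := hprim.two_mul_le hq h hne
  lia

end QGrading

universe u v

theorem symmetric_chain_basis_general {𝕜 : Type u} {α : Type v} [Field 𝕜] [PartialOrder 𝕜]
    [StarRing 𝕜] [StarOrderedRing 𝕜] [Lattice α] [IsModularLattice α] [Fintype α] {q n : ℕ}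
    {rk : α → ℕ} (hq : 0 < q) (h : IsQGrading q n rk) :
    ∃ (ι : Type (max u v)) (_ : Fintype ι) (start : ι → ℕ) (c : ι → ℕ → (α → 𝕜)),
      (∀ i, 2 * start i ≤ n) ∧
      (∀ i u, start i ≤ u → u ≤ n - start i → c i u ≠ 0 ∧ IsHomogeneous rk u (c i u)) ∧
      (∀ i u, start i ≤ u → u < n - start i →
        upMap 𝕜 α (c i u) = ((q : 𝕜) ^ start i * qInt q (u + 1 - start i)) • c i (u + 1)) ∧
      (∀ i, upMap 𝕜 α (c i (n - start i)) = 0) ∧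
      (∀ i u, start i ≤ u → u < n - start i →
        downMap 𝕜 α (c i (u + 1)) = (qInt q (n - start i - u) : 𝕜) • c i u) ∧
      (∀ i, downMap 𝕜 α (c i (start i)) = 0) ∧
      LinearIndependent 𝕜
        (fun p : Σ i : ι, {u : ℕ // start i ≤ u ∧ u ≤ n - start i} => c p.1 p.2.1) ∧
      ⊤ ≤ Submodule.span 𝕜
        (Set.range fun p : Σ i : ι, {u : ℕ // start i ≤ u ∧ u ≤ n - start i} => c p.1 p.2.1) := by
  obtain ⟨B, start, hprim, hli, hspan⟩ :=
    exists_isPrimitive_basis_ker (𝕜 := 𝕜) h.rank_le h.rank_add_one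
  let c (b : B) : ℕ → α → 𝕜 := qChain q (start b) b
  have hstart (b : B) : c b (start b) = b := qChain_self
  have hk (b : B) : 2 * start b ≤ n := (hprim b).two_mul_le hq h (hli.ne_zero b)
  have hup (b : B) (u : ℕ) (hu : start b ≤ u) := upMap_qChain (v := b.1) hq hu
  have hlast (b : B) : upMap 𝕜 α (c b (n - start b)) = 0 := by
    rw [hup b _ (by have := hk b; lia), (hprim b).qChain_eq_zero hq h (hk b), smul_zero]
  have hdown (b : B) (u : ℕ) (hu : start b ≤ u) (hun : u < n - start b) :=
    (hprim b).downMap_qChain_succ hq h hu (by lia)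
  have hbot (b : B) : downMap 𝕜 α (c b (start b)) = 0 := by
    rw [hstart, (hprim b).downMap_eq_zero]
  have hindep := linearIndependent_strings (c := c) hbot hdown
    (fun b u _ hu => Nat.cast_ne_zero.mpr (qInt_pos hq (Nat.sub_pos_of_lt hu)).ne')
    (by simpa only [hstart] using hli)
  have htop := span_strings_eq_top (c := c) (isNilpotent_upMap h.rank_le h.rank_add_one) hlast
    (fun b u hu _ => hup b u hu) (fun b => by have := hk b; lia)
    (by simpa only [hstart, Subtype.range_coe, hspan] using codisjoint_ker_downMap_range_upMap)
  have := hli.finite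
  exact ⟨B, Fintype.ofFinite B, start, c, hk, fun b u hu hun => ⟨hindep.ne_zero ⟨b, u, hu, hun⟩,
    (hprim b).isHomogeneous_qChain h.rank_add_one hu⟩, fun b u hu _ => hup b u hu, hlast, hdown,
    hbot, hindep, htop.ge⟩

section Subspaces

variable {K V : Type*} [Field K] [AddCommGroup V] [Module K V]

theorem submodule_covBy_iff_finrank [FiniteDimensional K V] {X Z : Submodule K V} :
    X ⋖ Z ↔ X ≤ Z ∧ finrank K X + 1 = finrank K Z := by
  rw [← and_iff_right_of_imp CovBy.le]
  refine and_congr_right fun hle => ?_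
  rw [covBy_iff_quot_is_simple hle, isSimpleModule_iff_finrank_eq_one,
    ← Submodule.finrank_quotient_add_finrank (X.comap Z.subtype),
    (Submodule.comapSubtypeEquivOfLe hle).finrank_eq, add_comm, add_left_inj, eq_comm]

variable [Finite K]

theorem card_isAtom_submodule :
    Nat.card {X : Submodule K V // IsAtom X} = qInt (Nat.card K) (finrank K V) := by
  rw [qInt, ← Projectivization.card_of_finrank K V rfl,
    Nat.card_congr (Projectivization.equivSubmodule K V)]
  simp only [Submodule.isAtom_iff_finrank_eq_one]

theorem card_isCoatom_submodule [FiniteDimensional K V] :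
    Nat.card {X : Submodule K V // IsCoatom X} = qInt (Nat.card K) (finrank K V) := by
  rw [← Subspace.dual_finrank_eq, ← card_isAtom_submodule]
  exact Nat.card_congr <| (Subspace.orderIsoFiniteDimensional.toEquiv.trans
    OrderDual.ofDual).subtypeEquiv fun X => by
      rw [← Subspace.orderIsoFiniteDimensional.isCoatom_iff, ← isCoatom_dual_iff_isAtom]
      rfl

theorem card_upper_covers_submodule [FiniteDimensional K V] (X : Submodule K V) :
    Nat.card {Y // X ⋖ Y} = qInt (Nat.card K) (finrank K V - finrank K X) := by
  have hdim := Submodule.finrank_quotient_add_finrank X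
  rw [← hdim, Nat.add_sub_cancel, ← card_isAtom_submodule]
  exact Nat.card_congr <| (Equiv.subtypeSubtypeEquivSubtype CovBy.le).symm.trans <|
    (Submodule.comapMkQRelIso X).toEquiv.symm.subtypeEquiv fun Y =>
      Set.Ici.isAtom_iff.symm.trans ((Submodule.comapMkQRelIso X).symm.isAtom_iff Y).symm

theorem card_lower_covers_submodule [FiniteDimensional K V] (X : Submodule K V) :
    Nat.card {Y // Y ⋖ X} = qInt (Nat.card K) (finrank K X) := by
  rw [← card_isCoatom_submodule]
  exact Nat.card_congr <| (Equiv.subtypeSubtypeEquivSubtype CovBy.le).symm.trans <|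
    X.mapIic.toEquiv.symm.subtypeEquiv fun Y =>
      Set.Iic.isCoatom_iff.symm.trans (X.mapIic.symm.isCoatom_iff Y).symm

theorem isQGrading_finrank [FiniteDimensional K V] :
    IsQGrading (Nat.card K) (finrank K V) fun X : Submodule K V => finrank K X where
  rank_le X := X.finrank_le
  rank_add_one _ _ h := (submodule_covBy_iff_finrank.mp h).2
  card_lower_covers := card_lower_covers_submodule
  card_upper_covers := card_upper_covers_submodule

end Subspaces

theorem upOp_eq_upMap (F : Type) [Field F] [Fintype F] (n : ℕ) : upOp F n = upMap ℂ _ := by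
  classical
  ext f Z
  simp only [upOp, upMap_apply, submodule_covBy_iff_finrank]

theorem downOp_eq_downMap (F : Type) [Field F] [Fintype F] (n : ℕ) :
    downOp F n = downMap ℂ _ := by
  classical
  ext f Z
  simp only [downOp, downMap_apply, submodule_covBy_iff_finrank]

/-- There is a basis of `ℂ[B_q(n)]` which is a disjoint union of symmetric chains
`(v_k, …, v_{n−k})` (consisting of nonzero homogeneous elements, `v_u` of rank `u`)
on which the up and down operators act by
`U_n(v_u) = q^k (u+1−k)_q v_{u+1}` and `D_n(v_{u+1}) = (n−k−u)_q v_u` for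
`k ≤ u < n−k`, with `U_n(v_{n−k}) = 0` and `D_n(v_k) = 0`. -/
theorem symmetric_chain_basis (F : Type) [Field F] [Fintype F] (n : ℕ) :
    ∃ (ι : Type) (_ : Fintype ι) (start : ι → ℕ)
      (c : ι → ℕ → (Submodule F (Fin n → F) → ℂ)),
      (∀ i, 2 * start i ≤ n) ∧
      (∀ i u, start i ≤ u → u ≤ n - start i →
        c i u ≠ 0 ∧ ∀ X, c i u X ≠ 0 → Module.finrank F X = u) ∧
      (∀ i u, start i ≤ u → u < n - start i →
        upOp F n (c i u) =
          ((Fintype.card F : ℂ) ^ (start i) *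
            (qInt (Fintype.card F) (u + 1 - start i) : ℂ)) • c i (u + 1)) ∧
      (∀ i, upOp F n (c i (n - start i)) = 0) ∧
      (∀ i u, start i ≤ u → u < n - start i →
        downOp F n (c i (u + 1)) =
          (qInt (Fintype.card F) (n - start i - u) : ℂ) • c i u) ∧
      (∀ i, downOp F n (c i (start i)) = 0) ∧
      LinearIndependent ℂ
        (fun p : Σ i : ι, {u : ℕ // start i ≤ u ∧ u ≤ n - start i} =>
          c p.1 p.2.1) ∧
      ⊤ ≤ Submodule.span ℂ
        (Set.range (fun p : Σ i : ι, {u : ℕ // start i ≤ u ∧ u ≤ n - start i} =>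
          c p.1 p.2.1)) := by
  have h := finrank_fin_fun F (n := n) ▸ isQGrading_finrank (K := F) (V := Fin n → F)
  simp only [upOp_eq_upMap, downOp_eq_downMap, ← Nat.card_eq_fintype_card]
  open scoped ComplexOrder in exact symmetric_chain_basis_general Nat.card_pos h
end

section
/- Let α = (α_1, …, α_n) ∈ {0,1}^n and set k = |S(α)| where S(α) = {i : α_i = 1}. Let w ∈ ℂ^{B_q(n)} be the vector with component w(X) = (−1)^{|S(α) ∩ P(X)|} q^{d(α,X)} at X ∈ B_q(n). Then M_q(n) · w = ((n−k)_q − (k)_q) · w. In particular w({0}) = q^{k(n−k)} and w(F_q^n) = (−1)^k. -/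
noncomputable instance (F : Type) [Field F] [Fintype F] (m : ℕ) :
    Fintype (Submodule F (Fin m → F)) := Fintype.ofFinite _

/-- The q-analog of the adjacency matrix of the n-cube. -/
noncomputable def Mq (F : Type) [Field F] [Fintype F] (n : ℕ) :
    Matrix (Submodule F (Fin n → F)) (Submodule F (Fin n → F)) ℂ :=
  open Classical in
  fun X Y =>
    if Y ≤ X ∧ Module.finrank F Y + 1 = Module.finrank F X then 1
    else if X ≤ Y ∧ Module.finrank F Y = Module.finrank F X + 1 then
      (Fintype.card F : ℂ) ^ (Module.finrank F X)
    else 0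

/-- The copy of `F^m` inside `F^n`: vectors whose coordinates of index `≥ m`
vanish. -/
def coordSpace (F : Type) [Field F] (n m : ℕ) : Submodule F (Fin n → F) where
  carrier := {v | ∀ i : Fin n, m ≤ (i : ℕ) → v i = 0}
  add_mem' := by
    intro a b ha hb i hi
    simp [ha i hi, hb i hi]
  zero_mem' := by intro i hi; rfl
  smul_mem' := by
    intro c v hv i hi
    simp [hv i hi]

/-- The pivotal set `P(X)` of a subspace `X ⊆ F^n`: here `j : Fin n` stands for the
index `j+1 ∈ {1, …, n}`, and `j ∈ P(X)` iff `X ∩ F^(j+1) ⊄ F^j`. -/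
noncomputable def pivots (F : Type) [Field F] [Fintype F] (n : ℕ)
    (X : Submodule F (Fin n → F)) : Finset (Fin n) :=
  open Classical in
  Finset.univ.filter fun j : Fin n =>
    ¬ (X ⊓ coordSpace F n ((j : ℕ) + 1) ≤ coordSpace F n (j : ℕ))

/-- `d(α, i) = |{j < i : α_j ≠ α_i}|`. -/
def dAlphaI (n : ℕ) (α : Fin n → Bool) (i : Fin n) : ℕ :=
  (Finset.univ.filter fun j : Fin n => (j : ℕ) < (i : ℕ) ∧ α j ≠ α i).card

/-- `d(α, X) = ∑_{i ∉ P(X)} d(α, i)`. -/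
noncomputable def dAlphaX (F : Type) [Field F] [Fintype F] (n : ℕ)
    (α : Fin n → Bool) (X : Submodule F (Fin n → F)) : ℕ :=
  ∑ i ∈ (Finset.univ \ pivots F n X), dAlphaI n α i

/-- The vector `w_α` with component `(−1)^(|S(α) ∩ P(X)|) q^(d(α,X))` at `X`. -/
noncomputable def wAlpha (F : Type) [Field F] [Fintype F] (n : ℕ)
    (α : Fin n → Bool) : Submodule F (Fin n → F) → ℂ :=
  fun X =>
    (-1 : ℂ) ^ ((pivots F n X).filter fun i => α i = true).card *
      (Fintype.card F : ℂ) ^ (dAlphaX F n α X)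

/-!
The value `w X` depends only on the pivotal set `P` of `X`, and along a cover of subspaces the
pivotal set changes by one element. The upper covers of `X` that gain the pivot `j` are the relative
complements of `X + F^j` in the interval `[X, X + F^(j+1)]`, and the lower covers that lose `j` are
those of `X ∩ F^(j+1)` in `[X ∩ F^j, X]`; there are `q^|{l ∉ P : l < j}|` and `q^|{l ∈ P : j < l}|`
of them. So `M_q(n)` acts on functions of `P`, with `n` neighbours of `P` in the cube weighted by
powers of `q`, and passing from `P` to the neighbour that differs at `j` multiplies `w` by
`±q^(±d(α,j))`, with sign `-1` exactly when `α_j = 1`. What remains is a signed sum of `n` powers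
of `q`, which deleting the largest index shows to be `(n-k)_q - (k)_q` whatever `P` is.
-/

section ModularLattice

variable {L : Type*} [Lattice L] [IsModularLattice L] {a b c x y : L}

theorem le_sup_iff_not_inf_le_of_covBy (h : x ⋖ y) : y ≤ x ⊔ c ↔ ¬ y ⊓ c ≤ x := by
  have hmod : x ⊔ y ⊓ c = y ⊓ (x ⊔ c) := by
    rw [inf_comm, inf_comm y, sup_inf_assoc_of_le c h.le]
  constructor
  · intro hy hx
    rw [sup_eq_left.2 hx, inf_eq_left.2 hy] at hmod
    exact h.ne hmod
  · intro hx
    have hsup : x ⊔ y ⊓ c = y :=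
      (h.eq_or_eq le_sup_left (sup_le h.le inf_le_left)).resolve_left (by simpa using hx)
    rw [← inf_eq_left, ← hmod, hsup]

theorem sup_covBy_sup_of_inf_le (h : a ⋖ b) (hx : x ⊓ b ≤ a) : x ⊔ a ⋖ x ⊔ b := by
  have hmod : (x ⊔ a) ⊓ b = a := by
    rw [sup_comm, sup_inf_assoc_of_le x h.le, sup_eq_left.2 hx]
  have hcov : x ⊔ a ⋖ (x ⊔ a) ⊔ b := covBy_sup_of_inf_covBy_right (by rwa [hmod])
  rwa [sup_assoc, sup_eq_right.2 h.le] at hcov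

theorem inf_covBy_inf_of_not_inf_le (h : a ⋖ b) (hx : ¬ x ⊓ b ≤ a) : x ⊓ a ⋖ x ⊓ b := by
  have hsup : a ⊔ x ⊓ b = b :=
    (h.eq_or_eq le_sup_left (sup_le h.le inf_le_right)).resolve_left (by simpa using hx)
  have hcov : a ⊓ (x ⊓ b) ⋖ x ⊓ b := inf_covBy_of_covBy_sup_left (by rwa [hsup])
  rwa [inf_left_comm, inf_eq_left.2 h.le] at hcov

theorem inf_le_and_not_inf_le_of_covBy (h : x ⋖ y) (hxb : x ⊓ b ≤ a) (hyb : ¬ y ⊓ b ≤ a)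
    (hab : a ≤ b) : y ⊓ a ≤ x ∧ ¬ y ⊓ b ≤ x := by
  refine ⟨?_, fun hyx => hyb ((le_inf hyx inf_le_right).trans hxb)⟩
  by_contra hya
  apply hyb
  calc y ⊓ b ≤ (a ⊔ x) ⊓ b :=
        inf_le_inf_right b (sup_comm a x ▸ (le_sup_iff_not_inf_le_of_covBy h).2 hya)
    _ = a ⊔ x ⊓ b := sup_inf_assoc_of_le x hab
    _ ≤ a := sup_le le_rfl hxb

/-- Zassenhaus' butterfly: the two sides say that the isomorphic intervals
`[a ⊔ x ⊓ b, a ⊔ y ⊓ b]` and `[x ⊔ y ⊓ a, x ⊔ y ⊓ b]` are nontrivial. -/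
theorem inf_le_and_not_inf_le_comm (hxy : x ⋖ y) (hab : a ⋖ b) :
    x ⊓ b ≤ a ∧ ¬ y ⊓ b ≤ a ↔ y ⊓ a ≤ x ∧ ¬ y ⊓ b ≤ x := by
  refine ⟨fun h => inf_le_and_not_inf_le_of_covBy hxy h.1 h.2 hab.le, fun h => ?_⟩
  have h' := inf_le_and_not_inf_le_of_covBy hab (x := a) (y := b) (a := x) (b := y)
    (inf_comm a y ▸ h.1) (inf_comm b y ▸ h.2) hxy.le
  rwa [inf_comm b x, inf_comm b y] at h'

theorem covBy_and_le_and_not_le_iff (hxa : x ≤ a) (hab : a ⋖ b) :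
    x ⋖ y ∧ y ≤ b ∧ ¬ y ≤ a ↔ a ⊓ y = x ∧ a ⊔ y = b := by
  constructor
  · rintro ⟨hxy, hyb, hya⟩
    refine ⟨?_, ?_⟩
    · exact (hxy.eq_or_eq (le_inf hxa hxy.le) inf_le_right).resolve_right (by simpa using hya)
    · exact (hab.eq_or_eq le_sup_left (sup_le hab.le hyb)).resolve_left (by simpa using hya)
  · rintro ⟨rfl, rfl⟩
    exact ⟨inf_covBy_of_covBy_sup_left hab, le_sup_right, fun h => hab.ne (sup_eq_left.2 h).symm⟩

theorem covBy_and_le_and_not_le_iff_dual (hab : a ⋖ b) (hbx : b ≤ x) :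
    y ⋖ x ∧ a ≤ y ∧ ¬ b ≤ y ↔ b ⊓ y = a ∧ b ⊔ y = x := by
  have h := covBy_and_le_and_not_le_iff (L := Lᵒᵈ) (x := .toDual x) (y := .toDual y)
    (OrderDual.toDual_le_toDual.2 hbx) hab.toDual
  rw [toDual_covBy_toDual_iff] at h
  exact h.trans and_comm

end ModularLattice

section FinrankSubmodule

open Module Submodule

variable {K V : Type*} [DivisionRing K] [AddCommGroup V] [Module K V] [FiniteDimensional K V]

theorem covBy_iff_le_and_finrank_eq {X Y : Submodule K V} :
    X ⋖ Y ↔ X ≤ Y ∧ finrank K Y = finrank K X + 1 := by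
  constructor
  · intro h
    obtain ⟨v, hvY, hvX⟩ := SetLike.exists_of_lt h.lt
    have hsup : X ⊔ K ∙ v = Y :=
      (h.eq_or_eq le_sup_left (sup_le h.le ((span_singleton_le_iff_mem v Y).2 hvY))).resolve_left
        (by simpa using hvX)
    exact ⟨h.le, by rw [← hsup, finrank_sup_span_singleton hvX]⟩
  · rintro ⟨hle, hdim⟩
    refine ⟨lt_of_le_of_finrank_lt_finrank hle (Nat.lt_of_succ_le hdim.ge), fun Z hXZ hZY => ?_⟩
    have hZ : finrank K Z < finrank K X + 1 := hdim ▸ finrank_lt_finrank_of_lt hZY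
    exact (finrank_lt_finrank_of_lt hXZ).not_ge (Nat.lt_succ_iff.1 hZ)

theorem finrank_map_mkQ_add_finrank {X A : Submodule K V} (hXA : X ≤ A) :
    finrank K (A.map X.mkQ) + finrank K X = finrank K A := by
  have hiso := (quotientQuotientEquivQuotient X A hXA).finrank_eq
  have hquot := finrank_quotient_add_finrank (A.map X.mkQ)
  have hX := finrank_quotient_add_finrank X
  have hA := finrank_quotient_add_finrank A
  omega

end FinrankSubmodule

section RelativeComplements

open Module Submodule

variable {K V : Type*} [Field K] [AddCommGroup V] [Module K V] [FiniteDimensional K V]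

theorem natCard_isCompl (A : Submodule K V) :
    Nat.card {Y : Submodule K V // IsCompl A Y} =
      Nat.card K ^ (finrank K A * (finrank K V - finrank K A)) := by
  let restrict : (V →ₗ[K] A) →ₗ[K] (A →ₗ[K] A) := LinearMap.lcomp K A A.subtype
  have hsurj : Function.Surjective restrict := fun g => by
    obtain ⟨f, hf⟩ := g.exists_extend
    exact ⟨f, hf⟩
  have hker : finrank K (LinearMap.ker restrict) =
      finrank K A * (finrank K V - finrank K A) := by
    have h := restrict.finrank_range_add_finrank_ker
    rw [LinearMap.range_eq_top.2 hsurj, finrank_top, finrank_linearMap, finrank_linearMap] at h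
    rw [Nat.mul_sub, mul_comm _ (finrank K V)]
    omega
  let fiberEquiv : {f : V →ₗ[K] A // ∀ x : A, f x = x} ≃ LinearMap.ker restrict :=
    (Equiv.subtypeEquivRight fun f => by simp [restrict, LinearMap.ext_iff]).trans
    (AddMonoidHom.fiberEquivKerOfSurjective (f := restrict.toAddMonoidHom) hsurj LinearMap.id)
  rw [Nat.card_congr (A.isComplEquivProj.trans fiberEquiv), natCard_eq_pow_finrank (K := K), hker]

theorem natCard_inf_eq_and_codisjoint {X A : Submodule K V} (hXA : X ≤ A) :
    Nat.card {Y : Submodule K V // A ⊓ Y = X ∧ Codisjoint A Y} =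
      Nat.card K ^ ((finrank K A - finrank K X) * (finrank K V - finrank K A)) := by
  let e := comapMkQRelIso X
  let equiv : {Y : Submodule K V // A ⊓ Y = X ∧ Codisjoint A Y} ≃
      {Y' : Submodule K (V ⧸ X) // IsCompl (A.map X.mkQ) Y'} :=
    (Equiv.subtypeSubtypeEquivSubtype (p := (· ∈ Set.Ici X))
        fun {Y} hY => hY.1.symm.trans_le inf_le_right).symm.trans
      (e.symm.toEquiv.subtypeEquiv fun Y =>
        (Set.Ici.isCompl_iff (x := ⟨A, hXA⟩)).symm.trans (OrderIso.isCompl_iff e.symm))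
  have hA := finrank_map_mkQ_add_finrank hXA
  have hX := finrank_quotient_add_finrank X
  rw [Nat.card_congr equiv, natCard_isCompl]
  congr 2 <;> omega

theorem natCard_inf_eq_and_sup_eq {X A B : Submodule K V} (hXA : X ≤ A) (hAB : A ≤ B) :
    Nat.card {Y : Submodule K V // A ⊓ Y = X ∧ A ⊔ Y = B} =
      Nat.card K ^ ((finrank K A - finrank K X) * (finrank K B - finrank K A)) := by
  have hinf (Y : Submodule K B) :
      A ⊓ Y.map B.subtype = X ↔ A.submoduleOf B ⊓ Y = X.submoduleOf B := by
    rw [← (map_injective_of_injective B.injective_subtype).eq_iff, map_inf _ B.injective_subtype]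
    simp [submoduleOf, map_comap_subtype, hAB, hXA.trans hAB]
  have hsup (Y : Submodule K B) :
      A ⊔ Y.map B.subtype = B ↔ Codisjoint (A.submoduleOf B) Y := by
    rw [codisjoint_iff, ← (map_injective_of_injective B.injective_subtype).eq_iff,
      Submodule.map_sup]
    simp [submoduleOf, map_comap_subtype, hAB]
  let equiv : {Y : Submodule K V // A ⊓ Y = X ∧ A ⊔ Y = B} ≃
      {Y : Submodule K B // A.submoduleOf B ⊓ Y = X.submoduleOf B ∧
        Codisjoint (A.submoduleOf B) Y} :=
    (Equiv.subtypeSubtypeEquivSubtype (p := (· ∈ Set.Iic B))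
        fun {Y} hY => le_sup_right.trans_eq hY.2).symm.trans
      (B.mapIic.toEquiv.subtypeEquiv fun Y => (and_congr (hinf Y) (hsup Y)).symm).symm
  have hmono : X.submoduleOf B ≤ A.submoduleOf B := comap_mono hXA
  rw [Nat.card_congr equiv, natCard_inf_eq_and_codisjoint hmono,
    (submoduleOfEquivOfLe hAB).finrank_eq, (submoduleOfEquivOfLe (hXA.trans hAB)).finrank_eq]

end RelativeComplements

section Pivots

open Module Finset

variable {F : Type} [Field F] {n : ℕ}

theorem coordSpace_zero : coordSpace F n 0 = ⊥ := by
  ext v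
  simp [coordSpace, funext_iff]

theorem coordSpace_self : coordSpace F n n = ⊤ := by
  ext v
  simp only [Submodule.mem_top, iff_true]
  exact fun i hi => absurd i.isLt hi.not_gt

theorem coordSpace_succ (j : Fin n) :
    coordSpace F n (j + 1) = F ∙ Pi.single j (1 : F) ⊔ coordSpace F n j := by
  apply le_antisymm
  · intro v hv
    refine Submodule.mem_sup.2 ⟨v j • Pi.single j 1, Submodule.smul_mem _ _
      (Submodule.mem_span_singleton_self _), v - v j • Pi.single j 1, fun i hi => ?_, by simp⟩
    rcases eq_or_ne i j with rfl | hij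
    · simp
    · simp [hij, hv i (Nat.lt_of_le_of_ne hi (Fin.val_ne_of_ne hij.symm))]
  · refine sup_le ((Submodule.span_singleton_le_iff_mem _ _).2 fun i hi => ?_)
      fun v hv i hi => hv i (Nat.le_of_succ_le hi)
    exact Pi.single_eq_of_ne (Fin.ne_of_gt hi) 1

theorem coordSpace_covBy_succ (j : Fin n) : coordSpace F n j ⋖ coordSpace F n (j + 1) := by
  rw [coordSpace_succ]
  exact Submodule.covBy_span_singleton_sup fun h => by simpa using h j le_rfl

theorem finrank_coordSpace {m : ℕ} (hm : m ≤ n) : finrank F (coordSpace F n m) = m := by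
  induction m with
  | zero => rw [coordSpace_zero, finrank_bot]
  | succ m ih =>
    rw [(covBy_iff_le_and_finrank_eq.1 (coordSpace_covBy_succ ⟨m, hm⟩)).2,
      ih (Nat.le_of_succ_le hm)]

variable [Fintype F]

theorem mem_pivots {X : Submodule F (Fin n → F)} {j : Fin n} :
    j ∈ pivots F n X ↔ ¬ X ⊓ coordSpace F n (j + 1) ≤ coordSpace F n j := by
  simp [pivots]

theorem notMem_pivots {X : Submodule F (Fin n → F)} {j : Fin n} :
    j ∉ pivots F n X ↔ X ⊓ coordSpace F n (j + 1) ≤ coordSpace F n j := by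
  rw [mem_pivots, not_not]

theorem pivots_mono : Monotone (pivots F n) := fun _ _ hXY _ hj =>
  mem_pivots.2 fun h => mem_pivots.1 hj ((inf_le_inf_right _ hXY).trans h)

theorem pivots_bot : pivots F n ⊥ = ∅ := by
  ext j
  simp [mem_pivots]

theorem pivots_top : pivots F n ⊤ = univ := by
  ext j
  simpa [mem_pivots] using (coordSpace_covBy_succ j).lt.not_ge

theorem finrank_inf_coordSpace_succ (X : Submodule F (Fin n → F)) (j : Fin n) :
    finrank F ↥(X ⊓ coordSpace F n (j + 1)) =
      finrank F ↥(X ⊓ coordSpace F n j) + if j ∈ pivots F n X then 1 else 0 := by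
  split_ifs with hj
  · have hcov := inf_covBy_inf_of_not_inf_le (coordSpace_covBy_succ j) (mem_pivots.1 hj)
    exact (covBy_iff_le_and_finrank_eq.1 hcov).2
  · have heq : X ⊓ coordSpace F n (j + 1) = X ⊓ coordSpace F n j :=
      le_antisymm (le_inf inf_le_left (notMem_pivots.1 hj))
        (inf_le_inf_left X (coordSpace_covBy_succ j).le)
    rw [add_zero, heq]

theorem finrank_inf_coordSpace (X : Submodule F (Fin n → F)) {m : ℕ} (hm : m ≤ n) :
    finrank F ↥(X ⊓ coordSpace F n m) = #{l ∈ pivots F n X | l.val < m} := by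
  induction m with
  | zero => simp [coordSpace_zero]
  | succ m ih =>
    have hdisj : Disjoint {l ∈ pivots F n X | l.val < m} {l ∈ pivots F n X | l = ⟨m, hm⟩} :=
      disjoint_filter.2 fun l _ hl h => hl.ne (congrArg Fin.val h)
    have hsplit : {l ∈ pivots F n X | l.val < m + 1} =
        {l ∈ pivots F n X | l.val < m} ∪ {l ∈ pivots F n X | l = ⟨m, hm⟩} := by
      simp only [← filter_or, Nat.lt_succ_iff_lt_or_eq, Fin.ext_iff]
    rw [finrank_inf_coordSpace_succ X ⟨m, hm⟩, ih (Nat.le_of_succ_le hm), hsplit,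
      card_union_of_disjoint hdisj, filter_eq', apply_ite Finset.card, card_singleton, card_empty]

theorem card_pivots (X : Submodule F (Fin n → F)) : #(pivots F n X) = finrank F X := by
  have h := finrank_inf_coordSpace X le_rfl
  rw [coordSpace_self, inf_top_eq] at h
  simp [h]

theorem pivots_covBy_pivots {X Y : Submodule F (Fin n → F)} (h : X ⋖ Y) :
    pivots F n X ⋖ pivots F n Y := by
  have hsub := pivots_mono h.le
  rw [covBy_iff_card_sdiff_eq_one, card_sdiff_of_subset hsub, card_pivots, card_pivots,
    (covBy_iff_le_and_finrank_eq.1 h).2, Nat.add_sub_cancel_left]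
  exact ⟨hsub, rfl⟩

theorem finrank_sup_coordSpace (X : Submodule F (Fin n → F)) {m : ℕ} (hm : m ≤ n) :
    finrank F ↥(X ⊔ coordSpace F n m) = finrank F X + #{l ∈ (pivots F n X)ᶜ | l.val < m} := by
  have hdim := Submodule.finrank_sup_add_finrank_inf_eq X (coordSpace F n m)
  have hsplit : #{l ∈ (pivots F n X)ᶜ | l.val < m} + #{l ∈ pivots F n X | l.val < m} = m := by
    rw [← card_union_of_disjoint (disjoint_filter_filter disjoint_compl_left), ← filter_union,
      union_comm, union_compl, Fin.card_filter_val_lt, min_eq_right hm]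
  rw [finrank_coordSpace hm, finrank_inf_coordSpace X hm] at hdim
  omega

theorem natCard_covBy_and_mem_pivots {X : Submodule F (Fin n → F)} {j : Fin n}
    (hj : j ∉ pivots F n X) :
    Nat.card {Y // X ⋖ Y ∧ j ∈ pivots F n Y} =
      Fintype.card F ^ #{l ∈ (pivots F n X)ᶜ | l < j} := by
  have hcov := sup_covBy_sup_of_inf_le (coordSpace_covBy_succ j) (notMem_pivots.1 hj)
  have hequiv (Y : Submodule F (Fin n → F)) : X ⋖ Y ∧ j ∈ pivots F n Y ↔
      (X ⊔ coordSpace F n j) ⊓ Y = X ∧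
        X ⊔ coordSpace F n j ⊔ Y = X ⊔ coordSpace F n (j + 1) := by
    rw [← covBy_and_le_and_not_le_iff le_sup_left hcov]
    refine and_congr_right fun hXY => ?_
    rw [le_sup_iff_not_inf_le_of_covBy hXY, le_sup_iff_not_inf_le_of_covBy hXY, not_not, and_comm,
      ← inf_le_and_not_inf_le_comm hXY (coordSpace_covBy_succ j), mem_pivots]
    exact (and_iff_right (notMem_pivots.1 hj)).symm
  rw [Nat.card_congr (Equiv.subtypeEquivRight hequiv),
    natCard_inf_eq_and_sup_eq le_sup_left hcov.le, (covBy_iff_le_and_finrank_eq.1 hcov).2,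
    finrank_sup_coordSpace X j.isLt.le, Nat.card_eq_fintype_card]
  simp

theorem natCard_covBy_and_notMem_pivots {X : Submodule F (Fin n → F)} {j : Fin n}
    (hj : j ∈ pivots F n X) :
    Nat.card {Y // Y ⋖ X ∧ j ∉ pivots F n Y} =
      Fintype.card F ^ #{l ∈ pivots F n X | j < l} := by
  have hcov := inf_covBy_inf_of_not_inf_le (coordSpace_covBy_succ j) (mem_pivots.1 hj)
  have hequiv (Y : Submodule F (Fin n → F)) : Y ⋖ X ∧ j ∉ pivots F n Y ↔
      X ⊓ coordSpace F n (j + 1) ⊓ Y = X ⊓ coordSpace F n j ∧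
        X ⊓ coordSpace F n (j + 1) ⊔ Y = X := by
    rw [← covBy_and_le_and_not_le_iff_dual hcov inf_le_left]
    refine and_congr_right fun hYX => ?_
    rw [← inf_le_and_not_inf_le_comm hYX (coordSpace_covBy_succ j), notMem_pivots]
    exact (and_iff_left (mem_pivots.1 hj)).symm
  have hinf : finrank F ↥(X ⊓ coordSpace F n (j + 1)) + #{l ∈ pivots F n X | j < l} =
      finrank F X := by
    rw [finrank_inf_coordSpace X j.isLt, ← card_pivots,
      ← card_filter_add_card_filter_not (s := pivots F n X) fun l => (l : ℕ) < j + 1]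
    simp only [not_lt, Nat.succ_le_iff, Fin.val_fin_lt]
  rw [Nat.card_congr (Equiv.subtypeEquivRight hequiv),
    natCard_inf_eq_and_sup_eq hcov.le inf_le_left, ← hinf, (covBy_iff_le_and_finrank_eq.1 hcov).2,
    Nat.card_eq_fintype_card]
  simp

end Pivots

section CoverSums

open Module Finset

variable {F : Type} [Field F] [Fintype F] {n : ℕ}

open Classical in
theorem sum_upperCovers_comp_pivots {M : Type*} [AddCommMonoid M] (X : Submodule F (Fin n → F))
    (g : Finset (Fin n) → M) :
    ∑ Y with X ⋖ Y, g (pivots F n Y) =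
      ∑ j ∈ (pivots F n X)ᶜ,
        Fintype.card F ^ #{l ∈ (pivots F n X)ᶜ | l < j} • g (insert j (pivots F n X)) := by
  have hsdiff (Y : Submodule F (Fin n → F)) (hXY : X ⋖ Y) :
      g (pivots F n Y) = ∑ j ∈ pivots F n Y \ pivots F n X, g (insert j (pivots F n X)) := by
    obtain ⟨j, hj, hjY⟩ := covBy_iff_exists_insert.1 (pivots_covBy_pivots hXY)
    rw [← hjY, insert_sdiff_cancel hj, sum_singleton]
  rw [sum_congr rfl fun Y hY => hsdiff Y (mem_filter_univ Y |>.1 hY),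
    sum_comm' (t' := (pivots F n X)ᶜ) (s' := fun j => {Y | X ⋖ Y ∧ j ∈ pivots F n Y})
      (by simp [and_assoc])]
  refine sum_congr rfl fun j hj => ?_
  rw [sum_const, ← natCard_covBy_and_mem_pivots (mem_compl.1 hj), Nat.card_eq_fintype_card,
    Fintype.card_subtype]

open Classical in
theorem sum_lowerCovers_comp_pivots {M : Type*} [AddCommMonoid M] (X : Submodule F (Fin n → F))
    (g : Finset (Fin n) → M) :
    ∑ Y with Y ⋖ X, g (pivots F n Y) =
      ∑ j ∈ pivots F n X,
        Fintype.card F ^ #{l ∈ pivots F n X | j < l} • g ((pivots F n X).erase j) := by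
  have hsdiff (Y : Submodule F (Fin n → F)) (hYX : Y ⋖ X) :
      g (pivots F n Y) = ∑ j ∈ pivots F n X \ pivots F n Y, g ((pivots F n X).erase j) := by
    obtain ⟨j, hj, hjY⟩ := covBy_iff_exists_erase.1 (pivots_covBy_pivots hYX)
    rw [← hjY, sdiff_erase_self hj, sum_singleton]
  rw [sum_congr rfl fun Y hY => hsdiff Y (mem_filter_univ Y |>.1 hY),
    sum_comm' (t' := pivots F n X) (s' := fun j => {Y | Y ⋖ X ∧ j ∉ pivots F n Y})
      (by simp [and_comm, and_assoc])]
  refine sum_congr rfl fun j hj => ?_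
  rw [sum_const, ← natCard_covBy_and_notMem_pivots hj, Nat.card_eq_fintype_card,
    Fintype.card_subtype]

open Classical in
theorem Mq_mulVec_apply (w : Submodule F (Fin n → F) → ℂ) (X : Submodule F (Fin n → F)) :
    (Mq F n).mulVec w X =
      ∑ Y with Y ⋖ X, w Y + (Fintype.card F : ℂ) ^ finrank F X * ∑ Y with X ⋖ Y, w Y := by
  rw [sum_filter, sum_filter, mul_sum, ← sum_add_distrib]
  refine sum_congr rfl fun Y _ => ?_
  simp only [Mq, covBy_iff_le_and_finrank_eq, eq_comm (a := finrank F X)]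
  split_ifs <;> first | omega | simp

theorem Mq_mulVec_comp_pivots (g : Finset (Fin n) → ℂ) (X : Submodule F (Fin n → F)) :
    (Mq F n).mulVec (fun Y => g (pivots F n Y)) X =
      ∑ j ∈ pivots F n X,
          (Fintype.card F : ℂ) ^ #{l ∈ pivots F n X | j < l} * g ((pivots F n X).erase j) +
        (Fintype.card F : ℂ) ^ #(pivots F n X) * ∑ j ∈ (pivots F n X)ᶜ,
          (Fintype.card F : ℂ) ^ #{l ∈ (pivots F n X)ᶜ | l < j} *
            g (insert j (pivots F n X)) := by
  classical
  simp only [Mq_mulVec_apply, sum_upperCovers_comp_pivots, sum_lowerCovers_comp_pivots,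
    card_pivots, nsmul_eq_mul, Nat.cast_pow]

end CoverSums

section SignedCount

open Finset

variable {ι : Type*} [LinearOrder ι]

theorem sum_card_filter_lt_and_ne (α : ι → Bool) (s : Finset ι) :
    ∑ i ∈ s, #{j ∈ s | j < i ∧ α j ≠ α i} = #{i ∈ s | α i = true} * #{i ∈ s | α i = false} := by
  induction s using Finset.induction_on_max with
  | empty => simp
  | insert m s hm ih =>
    have hms : m ∉ s := fun h => (hm m h).false
    have hold : ∑ i ∈ s, #{j ∈ insert m s | j < i ∧ α j ≠ α i} =
        ∑ i ∈ s, #{j ∈ s | j < i ∧ α j ≠ α i} :=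
      sum_congr rfl fun i hi => by rw [filter_insert, if_neg fun h => (hm i hi).asymm h.1]
    have hnew : #{j ∈ insert m s | j < m ∧ α j ≠ α m} = #{j ∈ s | α j ≠ α m} := by
      rw [filter_insert, if_neg (by simp), filter_congr fun j hj => and_iff_right (hm j hj)]
    rw [sum_insert hms, hold, hnew, ih]
    cases hα : α m <;> simp [filter_insert, hα, hms] <;> ring

/-- A new largest index `m ∉ P` adds the top power to one of the two geometric sums. For `m ∈ P`
all earlier terms are multiplied by `q`, and the new term is balanced by
`q * (k)_q + 1 = q ^ k + (k)_q` in the other sum. -/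
theorem sum_sign_mul_pow_eq_geom_sum_sub {R : Type*} [CommRing R] (q : R) (α : ι → Bool)
    (P s : Finset ι) :
    ∑ j ∈ s, (if α j then -1 else 1) *
        q ^ (#{l ∈ s | l ∈ P ∧ j < l} + #{l ∈ s | l < j ∧ (j ∈ P ↔ α l ≠ α j)}) =
      ∑ i ∈ range #{l ∈ s | α l = false}, q ^ i - ∑ i ∈ range #{l ∈ s | α l = true}, q ^ i := by
  induction s using Finset.induction_on_max with
  | empty => simp
  | insert m s hm ih =>
    have hms : m ∉ s := fun h => (hm m h).false
    have hold (j : ι) (hj : j ∈ s) :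
        #{l ∈ insert m s | l ∈ P ∧ j < l} + #{l ∈ insert m s | l < j ∧ (j ∈ P ↔ α l ≠ α j)} =
          #{l ∈ s | l ∈ P ∧ j < l} + #{l ∈ s | l < j ∧ (j ∈ P ↔ α l ≠ α j)} +
            if m ∈ P then 1 else 0 := by
      by_cases hmP : m ∈ P <;>
        simp [filter_insert, hm j hj, (hm j hj).not_gt, hms, hmP, add_right_comm]
    have hnew : #{l ∈ insert m s | l ∈ P ∧ m < l} +
        #{l ∈ insert m s | l < m ∧ (m ∈ P ↔ α l ≠ α m)} = #{l ∈ s | m ∈ P ↔ α l ≠ α m} := by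
      have hempty : {l ∈ s | l ∈ P ∧ m < l} = ∅ :=
        filter_eq_empty_iff.2 fun l hl h => (hm l hl).asymm h.2
      simp only [filter_insert, lt_irrefl, and_false, false_and, if_false, hempty, card_empty,
        zero_add, filter_congr fun l hl => and_iff_right (hm l hl)]
    rw [sum_insert hms, hnew,
      sum_congr rfl fun j hj => by rw [hold j hj, pow_add, ← mul_assoc],
      ← sum_mul, ih]
    have hgeom (k : ℕ) : q * ∑ i ∈ range k, q ^ i + 1 = q ^ k + ∑ i ∈ range k, q ^ i := by
      rw [← geom_sum_succ, geom_sum_succ']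
    by_cases hmP : m ∈ P <;> cases hα : α m <;>
      simp only [filter_insert, hα, hmP, hms, mem_filter, false_and, not_false_eq_true,
        card_insert_of_notMem, if_true, if_false, true_iff, false_iff, ne_eq, Bool.not_eq_true,
        Bool.not_eq_false, Bool.false_eq_true, reduceCtorEq, pow_one, pow_zero, geom_sum_succ']
    · linear_combination hgeom (#{l ∈ s | α l = false}) - hgeom (#{l ∈ s | α l = true})
    · linear_combination hgeom (#{l ∈ s | α l = false}) - hgeom (#{l ∈ s | α l = true})
    · ring
    · ring

end SignedCount

section PivotWeight

open Finset

variable {n : ℕ} {R : Type*} [CommRing R] {P : Finset (Fin n)} {j : Fin n}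

theorem dAlphaI_add_card_filter_eq (α : Fin n → Bool) (j : Fin n) :
    dAlphaI n α j + #{l | l < j ∧ α l = α j} = j := by
  rw [← Fin.card_Iio j, ← filter_gt_eq_Iio, add_comm,
    ← card_filter_add_card_filter_not (s := {l | l < j}) (fun l => α l = α j),
    filter_filter, filter_filter]
  rfl

theorem card_add_card_filter_compl_lt (hj : j ∉ P) :
    #P + #{l ∈ Pᶜ | l < j} = #{l ∈ P | j < l} + j := by
  have hP : #P = #{l ∈ P | l < j} + #{l ∈ P | j < l} := by
    rw [← card_filter_add_card_filter_not (s := P) (· < j),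
      filter_congr fun l hl => not_lt.trans (ne_of_mem_of_not_mem hl hj).symm.le_iff_lt]
  have hIio : #{l ∈ P | l < j} + #{l ∈ Pᶜ | l < j} = j := by
    rw [← card_union_of_disjoint (disjoint_filter_filter disjoint_compl_right), ← filter_union,
      union_compl, filter_gt_eq_Iio, Fin.card_Iio]
  omega

/-- The component of `w_α` at a subspace with pivotal set `P`, with an arbitrary ring element in
place of the prime power `q`. -/
def pivotWeight (q : R) (α : Fin n → Bool) (P : Finset (Fin n)) : R :=
  (-1) ^ #{i ∈ P | α i = true} * q ^ ∑ i ∈ Pᶜ, dAlphaI n α i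

theorem pow_mul_pivotWeight_insert (q : R) (α : Fin n → Bool) (hj : j ∉ P) :
    q ^ dAlphaI n α j * pivotWeight q α (insert j P) =
      (if α j then -1 else 1) * pivotWeight q α P := by
  rw [pivotWeight, pivotWeight, ← insert_compl_insert hj, sum_insert (by simp), filter_insert]
  split_ifs with hα
  · rw [card_insert_of_notMem (by simp [hj])]
    ring
  · ring

theorem pivotWeight_erase (q : R) (α : Fin n → Bool) (hj : j ∈ P) :
    pivotWeight q α (P.erase j) =
      (if α j then -1 else 1) * q ^ dAlphaI n α j * pivotWeight q α P := by
  have h := pow_mul_pivotWeight_insert q α (notMem_erase j P)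
  rw [insert_erase hj] at h
  rw [mul_assoc, h]
  split_ifs <;> ring

theorem sum_pivotWeight_neighbors (q : R) (α : Fin n → Bool) (P : Finset (Fin n)) :
    ∑ j ∈ P, q ^ #{l ∈ P | j < l} * pivotWeight q α (P.erase j) +
        q ^ #P * ∑ j ∈ Pᶜ, q ^ #{l ∈ Pᶜ | l < j} * pivotWeight q α (insert j P) =
      (∑ i ∈ range #{l | α l = false}, q ^ i - ∑ i ∈ range #{l | α l = true}, q ^ i) *
        pivotWeight q α P := by
  rw [← sum_sign_mul_pow_eq_geom_sum_sub q α P univ, ← sum_add_sum_compl P, add_mul,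
    sum_mul, sum_mul, mul_sum]
  have hP (j : Fin n) : #{l | l ∈ P ∧ j < l} = #{l ∈ P | j < l} := by
    rw [← filter_filter, filter_univ_mem]
  simp only [hP]
  congr 1 <;> refine sum_congr rfl fun j hj => ?_
  · have hexp : #{l | l < j ∧ (j ∈ P ↔ α l ≠ α j)} = dAlphaI n α j := by simp [hj, dAlphaI]
    rw [pivotWeight_erase q α hj, hexp, pow_add]
    ring
  · rw [mem_compl] at hj
    have hexp : #{l | l < j ∧ (j ∈ P ↔ α l ≠ α j)} = #{l | l < j ∧ α l = α j} := by simp [hj]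
    calc q ^ #P * (q ^ #{l ∈ Pᶜ | l < j} * pivotWeight q α (insert j P))
        = q ^ #{l ∈ P | j < l} * q ^ #{l | l < j ∧ α l = α j} *
            (q ^ dAlphaI n α j * pivotWeight q α (insert j P)) := by
          rw [← mul_assoc, ← pow_add, card_add_card_filter_compl_lt hj,
            ← dAlphaI_add_card_filter_eq α j]
          ring
      _ = _ := by
          rw [pow_mul_pivotWeight_insert q α hj, hexp, pow_add]
          ring

end PivotWeight

/-- `w_α` is an eigenvector of `M_q(n)` with eigenvalue `(n−k)_q − (k)_q`, where
`k = |S(α)|`; its component at the zero subspace is `q^(k(n−k))` and its component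
at `F^n` is `(−1)^k`. -/
theorem wAlpha_eigenvector (F : Type) [Field F] [Fintype F] (n : ℕ)
    (α : Fin n → Bool) (k : ℕ)
    (hk : k = (Finset.univ.filter fun i : Fin n => α i = true).card) :
    (Mq F n).mulVec (wAlpha F n α) =
      ((qInt (Fintype.card F) (n - k) : ℂ) - (qInt (Fintype.card F) k : ℂ)) •
        wAlpha F n α ∧
    wAlpha F n α ⊥ = (Fintype.card F : ℂ) ^ (k * (n - k)) ∧
    wAlpha F n α ⊤ = (-1 : ℂ) ^ k := by
  have hnk : n - k = (Finset.univ.filter fun i : Fin n => α i = false).card := by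
    have h := Finset.card_filter_add_card_filter_not (s := Finset.univ)
      fun i : Fin n => α i = true
    simp only [Bool.not_eq_true, Finset.card_fin] at h
    omega
  rw [hnk, hk]
  refine ⟨?_, ?_, ?_⟩
  · funext X
    simp only [Pi.smul_apply, smul_eq_mul, qInt, Nat.cast_sum, Nat.cast_pow]
    exact (Mq_mulVec_comp_pivots (pivotWeight _ α) X).trans (sum_pivotWeight_neighbors _ α _)
  · simp [wAlpha, dAlphaX, pivots_bot, dAlphaI, ← sum_card_filter_lt_and_ne α Finset.univ]
  · simp [wAlpha, dAlphaX, pivots_top]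
end
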